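/- Let ε, Δτ, C, q₀ ∈ ℝ and suppose (p(n), q(n)) satisfies the lifted T̂_{ε,Δτ} recursion for all n ∈ ℕ. Define sₙ = Δτ·p(n) + 2q(n) − q₀ − CΔτ(n + 1/2) and tₙ = Δτ·p(n+1) + 2q(n+1) − q₀ − CΔτ(n + 3/2). Then for all n ∈ ℕ: s_{n+1} = tₙ and t_{n+1} = 2tₙ − 2ε(Δτ)²·tan(π tₙ) − sₙ; i.e., the sequence (sₙ, tₙ) is an orbit of the map T̃_{ε,Δτ}(s,t) = (t, 2t − 2ε(Δτ)²·tan(πt) − s), which realizes (on the lifts) the topological semi-conjugacy between T̂_{ε,Δτ} and T̃_{ε,Δτ}. -/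

import Mathlib

/-- A sequence `(p n, q n)` satisfies the lifted `T̂_{ε,Δτ}` recursion. -/
noncomputable def ThatRecursion (ε Δτ C q₀ : ℝ) (p q : ℕ → ℝ) : Prop :=
  ∀ n : ℕ,
    p (n + 1) = p n - ε * Δτ *
      Real.tan (Real.pi * (2 * q n + Δτ * p n - q₀ - C * Δτ * ((n : ℝ) + 1 / 2))) ∧
    q (n + 1) = q n + p n * Δτ - (ε * Δτ ^ 2 / 2) *
      Real.tan (Real.pi * (2 * q n + Δτ * p n - q₀ - C * Δτ * ((n : ℝ) + 1 / 2)))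

/-- The variables `sₙ, tₙ` obtained from a `T̂_{ε,Δτ}` orbit form an orbit of the
map `T̃_{ε,Δτ}(s,t) = (t, 2t − 2ε(Δτ)²·tan(πt) − s)` (semi-conjugacy on the lifts). -/
theorem That_semiconjugate_Ttilde (ε Δτ C q₀ : ℝ) (p q : ℕ → ℝ)
    (hpq : ThatRecursion ε Δτ C q₀ p q)
    (s t : ℕ → ℝ)
    (hs : ∀ n : ℕ, s n = Δτ * p n + 2 * q n - q₀ - C * Δτ * ((n : ℝ) + 1 / 2))
    (ht : ∀ n : ℕ, t n = Δτ * p (n + 1) + 2 * q (n + 1) - q₀ - C * Δτ * ((n : ℝ) + 3 / 2)) :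
    ∀ n : ℕ,
      s (n + 1) = t n ∧
      t (n + 1) = 2 * t n - 2 * ε * Δτ ^ 2 * Real.tan (Real.pi * t n) - s n := by
  intro n
  have h1 : s (n + 1) = t n := by
    rw [hs, ht]; push_cast; ring
  refine ⟨h1, ?_⟩
  obtain ⟨hp0, hq0⟩ := hpq n
  obtain ⟨hp1, hq1⟩ := hpq (n + 1)
  have harg : 2 * q (n + 1) + Δτ * p (n + 1) - q₀ - C * Δτ * (((n + 1 : ℕ) : ℝ) + 1 / 2) = t n := by
    rw [← h1, hs]; ring
  rw [harg] at hp1 hq1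
  generalize Real.tan (Real.pi * t n) = T1 at *
  generalize Real.tan _ = T0 at hp0 hq0
  rw [ht (n + 1), ht n, hs n, hp1, hq1, hp0, hq0]
  push_cast
  ring
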